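/- arXiv:1802.04586 — 2 statements merged into one kernel-verified Lean document; each statement's English description precedes it below -/
import Mathlib

section
/- Let k ≥ 3, 1 ≤ ℓ ≤ k−1, a ≥ 1, 0 ≤ x ≤ k be integers, and set b = 2x + ℓ + (k−ℓ)a. Suppose 0 < ε ≤ ℓ/(2a) and 1/n ≪ γ, 1/a, 1/k. Let V be an n-vertex set, and let ℱ₁, …, ℱ_t be t ≤ n^{2k} families, each consisting of γ·n^b ordered b-subsets of V. If G = 𝔾^{(k)}(n,p) with p ≥ n^{−(k−ℓ)−ε}, then with probability at least 1 − exp(−n^{1/3}), for every i ∈ [t] at least (γ/2)·p^a·n^b members of ℱ_i span labeled copies of P_{a,x} in G. -/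
open Finset
open scoped Classical

/-- All `k`-subsets of `Fin n` (the possible edges of a `k`-graph on `n` vertices). -/
def kSets (n k : ℕ) : Finset (Finset (Fin n)) := Finset.univ.powersetCard k

/-- The probability that the binomial random `k`-graph `G^{(k)}(n,p)` (each `k`-set is an
edge independently with probability `p`) has an edge set satisfying the property `A`. -/
noncomputable def gProb (n k : ℕ) (p : ℝ) (A : Finset (Finset (Fin n)) → Prop) : ℝ :=
  ∑ E ∈ (kSets n k).powerset.filter (fun E => A E),
    p ^ E.card * (1 - p) ^ ((kSets n k).card - E.card)

/-- Expectation of a random variable `f` of the random `k`-graph `G^{(k)}(n,p)`. -/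
noncomputable def gExpect (n k : ℕ) (p : ℝ) (f : Finset (Finset (Fin n)) → ℝ) : ℝ :=
  ∑ E ∈ (kSets n k).powerset,
    p ^ E.card * (1 - p) ^ ((kSets n k).card - E.card) * f E

/-- The degree of a vertex set `S` in the `k`-graph with edge set `E`: the number of edges
containing `S` (equivalently, the number of `(k-|S|)`-sets `T` with `S ∪ T ∈ E`). -/
def degOf {n : ℕ} (E : Finset (Finset (Fin n))) (S : Finset (Fin n)) : ℕ :=
  (E.filter (fun e => S ⊆ e)).card

/-- The minimum vertex degree (minimum 1-degree) of a `k`-graph. -/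
noncomputable def minVertexDeg {n : ℕ} (E : Finset (Finset (Fin n))) : ℕ :=
  sInf {d : ℕ | ∃ v : Fin n, degOf E {v} = d}

/-- The index set of the `i`-th edge of the path `P_{a,x}`:
`{x + i*d, x + i*d + 1, …, x + i*d + k - 1}` (here `d = k - ℓ`). -/
def edgeIdx (k d x i : ℕ) : Finset ℕ := (Finset.range k).image (fun j => x + i * d + j)

/-- The ordered `b`-tuple `w` spans a labeled copy of `P_{a,x}` (the `k`-uniform `ℓ`-path
with `a` edges, preceded and followed by `x` isolated vertices) in the edge set `E`. -/
def SpansPax {n : ℕ} (k ℓ a x : ℕ) (E : Finset (Finset (Fin n))) {b : ℕ}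
    (w : Fin b → Fin n) : Prop :=
  Function.Injective w ∧
  ∀ i < a,
    ((Finset.univ.filter (fun m : Fin b => (m : ℕ) ∈ edgeIdx k (k - ℓ) x i)).image w) ∈ E

/-- The ordered tuple `w` spans a labeled copy of the `ℓ`-path `P_a` of length `a` in `E`. -/
def SpansPath {n : ℕ} (k ℓ a : ℕ) (E : Finset (Finset (Fin n))) {b : ℕ}
    (w : Fin b → Fin n) : Prop :=
  SpansPax k ℓ a 0 E w

/-- The first `ℓ`-end of the ordered tuple `w` (its first `ℓ` vertices, as a set). -/
def firstEnd {n b : ℕ} (ℓ : ℕ) (w : Fin b → Fin n) : Finset (Fin n) :=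
  (Finset.univ.filter (fun m : Fin b => (m : ℕ) < ℓ)).image w

/-- The last `ℓ`-end of the ordered tuple `w` (its last `ℓ` vertices, as a set). -/
def lastEnd {n b : ℕ} (ℓ : ℕ) (w : Fin b → Fin n) : Finset (Fin n) :=
  (Finset.univ.filter (fun m : Fin b => b - ℓ ≤ (m : ℕ))).image w

/-- The `k`-graph with edge set `E` on vertex set `Fin n` contains a Hamiltonian `ℓ`-cycle:
there is a cyclic ordering of all `n` vertices such that each of the `n/(k-ℓ)` edges
consists of `k` consecutive vertices, consecutive edges overlapping in `ℓ` vertices. -/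
def IsHamCycle (n k ℓ : ℕ) (E : Finset (Finset (Fin n))) : Prop :=
  ∃ f : ZMod n → Fin n, Function.Bijective f ∧
    ∀ i < n / (k - ℓ),
      ((Finset.range k).image (fun j => f (((i * (k - ℓ) + j : ℕ) : ZMod n)))) ∈ E

/-- The `ℓ`-shadow of a `k`-graph: all `ℓ`-sets contained in some edge. -/
def shadowL {n : ℕ} (ℓ : ℕ) (E : Finset (Finset (Fin n))) : Finset (Finset (Fin n)) :=
  (Finset.univ.powersetCard ℓ).filter (fun S => ∃ e ∈ E, S ⊆ e)

/-- The list `v` of vertices spans a copy of the `ℓ`-path `P_a` of length `a` in `E`. -/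
def ListSpans {n : ℕ} (k ℓ a : ℕ) (E : Finset (Finset (Fin n))) (v : List (Fin n)) : Prop :=
  v.Nodup ∧ v.length = a * (k - ℓ) + ℓ ∧
    ∀ i < a, ((v.drop (i * (k - ℓ))).take k).toFinset ∈ E

/-- `Φ_F(n,p) = min { n^{v_H} p^{e_H} : H ⊆ F, e_H > 0 }`, where the subgraph `H` is given
by a nonempty edge set `E' ⊆ F` together with a vertex set `W` containing all its edges. -/
noncomputable def Phi {V : Type*} (n : ℕ) (p : ℝ) (F : Finset (Finset V)) : ℝ :=
  sInf {r : ℝ | ∃ (W : Finset V) (E' : Finset (Finset V)),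
    E' ⊆ F ∧ E'.Nonempty ∧ (∀ e ∈ E', e ⊆ W) ∧ r = (n : ℝ) ^ W.card * p ^ E'.card}

/-- The ordered tuple `w` spans a labeled copy of the `k`-graph `F` (given by its edge set
`Fe` on vertex set `Fin s`) in the edge set `E`. -/
def SpansCopy {n s : ℕ} (Fe : Finset (Finset (Fin s))) (E : Finset (Finset (Fin n)))
    (w : Fin s → Fin n) : Prop :=
  ∀ e ∈ Fe, e.image w ∈ E

/-- Concatenation of three ordered tuples. -/
def concat3 {n p q r : ℕ} (A : Fin p → Fin n) (C : Fin q → Fin n) (B : Fin r → Fin n)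
    (m : Fin (p + q + r)) : Fin n :=
  if h : (m : ℕ) < p then A ⟨(m : ℕ), h⟩
  else if h2 : (m : ℕ) < p + q then C ⟨(m : ℕ) - p, by omega⟩
  else B ⟨(m : ℕ) - (p + q), by have := m.isLt; omega⟩

/-- `w`, spanning an `ℓ`-path of length `a`, is a `W`-absorber in `E`: it avoids `W`, and
its vertex set together with `W` spans an `ℓ`-path (of length `a+1` when `|W| = k - ℓ`)
with the same two `ℓ`-ends. -/
def IsAbsorber {n : ℕ} (k ℓ a : ℕ) (E : Finset (Finset (Fin n))) {b : ℕ}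
    (w : Fin b → Fin n) (W : Finset (Fin n)) : Prop :=
  (∀ m, w m ∉ W) ∧
  ∃ w' : Fin (b + W.card) → Fin n, SpansPath k ℓ (a + 1) E w' ∧
    Finset.image w' Finset.univ = Finset.image w Finset.univ ∪ W ∧
    firstEnd ℓ w' = firstEnd ℓ w ∧ lastEnd ℓ w' = lastEnd ℓ w

/-!
Janson's inequality bounds the lower tail of the number of members of one family that span a copy of
`F = P_{a,x}` by `exp (-c Φ_F)`. Indeed, two tuples whose copies share the edges in `J ⊆ F` map all
vertices covered by `J` to common vertices, so there are few such pairs, and `Δ = O(μ² / Φ_F)`.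
Any `j` edges of the path cover at least `(k - ℓ) j + ℓ` vertices, hence `Φ_F ≥ n ^ (ℓ / 2) ≥ √n`,
and `exp (-c √n)` survives a union bound over polynomially many families with room to spare.
-/

/-! ### Random subsets -/

section RandomSubset

variable {α : Type*}

/-- The probability that the binomial random subset of `S`, which contains each element of `S`
independently with probability `p`, equals `E ⊆ S`. -/
def binomialWeight (S : Finset α) (p : ℝ) (E : Finset α) : ℝ :=
  p ^ #E * (1 - p) ^ (#S - #E)

/-- The expectation of a function of the binomial random subset of `S` with density `p`, as a linear
functional. -/
noncomputable def binomialExpect (S : Finset α) (p : ℝ) : (Finset α → ℝ) →ₗ[ℝ] ℝ :=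
  ∑ E ∈ S.powerset, binomialWeight S p E • LinearMap.proj E

variable (S : Finset α) {p : ℝ}

lemma binomialExpect_apply (p : ℝ) (f : Finset α → ℝ) :
    binomialExpect S p f = ∑ E ∈ S.powerset, binomialWeight S p E * f E := by
  simp [binomialExpect, LinearMap.sum_apply]

lemma binomialWeight_nonneg (hp : p ∈ Set.Icc 0 1) (E : Finset α) :
    0 ≤ binomialWeight S p E :=
  mul_nonneg (pow_nonneg hp.1 _) (pow_nonneg (sub_nonneg.2 hp.2) _)

lemma binomialExpect_one (p : ℝ) : binomialExpect S p 1 = 1 := by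
  simp [binomialExpect_apply, binomialWeight, sum_pow_mul_eq_add_pow]

lemma binomialExpect_mono (hp : p ∈ Set.Icc 0 1) : Monotone (binomialExpect S p) := by
  intro f g hfg
  simp only [binomialExpect_apply]
  exact sum_le_sum fun E _ => mul_le_mul_of_nonneg_left (hfg E) (binomialWeight_nonneg S hp E)

lemma binomialExpect_nonneg (hp : p ∈ Set.Icc 0 1) {f : Finset α → ℝ} (hf : 0 ≤ f) :
    0 ≤ binomialExpect S p f :=
  map_zero (binomialExpect S p) ▸ binomialExpect_mono S hp hf

lemma binomialWeight_mul_binomialWeight [DecidableEq α] {S A B : Finset α} (hA : A ⊆ S)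
    (hB : B ⊆ S) (p : ℝ) :
    binomialWeight S p A * binomialWeight S p B =
      binomialWeight S p (A ∩ B) * binomialWeight S p (A ∪ B) := by
  have hcard := card_union_add_card_inter A B
  have hle := card_le_card (union_subset hA hB)
  have hA' := card_le_card hA
  have hinter := card_le_card (inter_subset_left (s₁ := A) (s₂ := B))
  have hB' := card_le_card hB
  simp only [binomialWeight]
  rw [mul_mul_mul_comm, mul_mul_mul_comm (p ^ #(A ∩ B)), ← pow_add, ← pow_add, ← pow_add, ← pow_add]
  congr 2 <;> omega

lemma binomialExpect_mul_le_of_antitone (hp : p ∈ Set.Icc 0 1) {f g : Finset α → ℝ}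
    (hf₀ : 0 ≤ f) (hg₀ : 0 ≤ g) (hf : Antitone f) (hg : Antitone g) :
    binomialExpect S p f * binomialExpect S p g ≤ binomialExpect S p (f * g) := by
  have hw := binomialWeight_nonneg S hp
  have four := S.four_functions_theorem
    (f₁ := fun E => binomialWeight S p E * f E) (f₂ := fun E => binomialWeight S p E * g E)
    (f₃ := fun E => binomialWeight S p E * (f E * g E)) (f₄ := binomialWeight S p)
    (fun E => mul_nonneg (hw E) (hf₀ E)) (fun E => mul_nonneg (hw E) (hg₀ E))
    (fun E => mul_nonneg (hw E) (mul_nonneg (hf₀ E) (hg₀ E))) hw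
    (fun A hA B hB => by
      rw [mul_mul_mul_comm, binomialWeight_mul_binomialWeight hA hB, mul_right_comm]
      have hfA : f A ≤ f (A ∩ B) := hf inter_subset_left
      have hgB : g B ≤ g (A ∩ B) := hg inter_subset_right
      gcongr
      exacts [hw _, hw _, hg₀ B, hf₀ _])
    (subset_refl S.powerset) (subset_refl S.powerset)
  rw [powerset_infs_powerset_self, powerset_sups_powerset_self] at four
  have htotal : ∑ E ∈ S.powerset, binomialWeight S p E = 1 := by
    simpa [binomialExpect_apply] using binomialExpect_one S p
  simpa only [← binomialExpect_apply, htotal, mul_one] using! four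

variable [DecidableEq α]

lemma binomialExpect_insert {S : Finset α} {e : α} (he : e ∉ S) (p : ℝ) (f : Finset α → ℝ) :
    binomialExpect (insert e S) p f =
      (1 - p) * binomialExpect S p f + p * binomialExpect S p (fun E => f (insert e E)) := by
  simp only [binomialExpect_apply, sum_powerset_insert he, mul_sum]
  congr 1 <;> refine sum_congr rfl fun E hE => ?_
  · rw [binomialWeight, binomialWeight, card_insert_of_notMem he,
      Nat.succ_sub (card_le_card (mem_powerset.1 hE)), pow_succ]
    ring
  · rw [binomialWeight, binomialWeight, card_insert_of_notMem he,
      card_insert_of_notMem fun h => he (mem_powerset.1 hE h), Nat.add_sub_add_right, pow_succ]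
    ring

lemma binomialExpect_indicator_mem {S : Finset α} {e : α} (he : e ∈ S) (p : ℝ)
    (f : Finset α → ℝ) :
    binomialExpect S p ({E | e ∈ E}.indicator f) =
      p * binomialExpect S p (fun E => f (insert e E)) := by
  obtain ⟨S, heS, rfl⟩ : ∃ S', e ∉ S' ∧ insert e S' = S :=
    ⟨S.erase e, notMem_erase e S, insert_erase he⟩
  have hzero : binomialExpect S p ({E | e ∈ E}.indicator f) = 0 := by
    rw [binomialExpect_apply]
    refine sum_eq_zero fun E hE => ?_
    have he : e ∉ E := fun h => heS (mem_powerset.1 hE h)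
    simp only [Set.indicator, Set.mem_ofPred_eq, he, if_false, mul_zero]
  simp only [binomialExpect_insert heS, hzero, Set.indicator, Set.mem_ofPred_eq, mem_insert_self,
    if_true, insert_idem]
  ring

lemma binomialExpect_indicator_superset {S A : Finset α} (hA : A ⊆ S) (p : ℝ)
    (f : Finset α → ℝ) :
    binomialExpect S p ({E | A ⊆ E}.indicator f) =
      p ^ #A * binomialExpect S p (fun E => f (E ∪ A)) := by
  induction A using Finset.induction_on generalizing f with
  | empty => simp
  | insert e A he ih =>
    obtain ⟨heS, hAS⟩ := insert_subset_iff.1 hA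
    have hsplit : {E : Finset α | insert e A ⊆ E}.indicator f =
        {E | e ∈ E}.indicator ({E | A ⊆ E}.indicator f) := by
      rw [Set.indicator_indicator]
      congr 1
      ext E
      exact insert_subset_iff
    have hinsert : (fun E => {E : Finset α | A ⊆ E}.indicator f (insert e E)) =
        {E | A ⊆ E}.indicator (fun E => f (insert e E)) := by
      funext E
      simp only [Set.indicator, Set.mem_ofPred_eq, subset_insert_iff_of_notMem he]
    rw [hsplit, binomialExpect_indicator_mem heS, hinsert, ih hAS, card_insert_of_notMem he,
      pow_succ']
    simp only [union_insert, mul_assoc]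

end RandomSubset

/-! ### Janson's inequality -/

section Janson

lemma antitone_exp_neg_mul {β : Type*} [Preorder β] {s : ℝ} (hs : 0 ≤ s) {Y : β → ℝ}
    (hY : Monotone Y) : Antitone fun x => Real.exp (-(s * Y x)) :=
  fun _ _ h => Real.exp_le_exp.2 (neg_le_neg (mul_le_mul_of_nonneg_left (hY h) hs))

lemma le_mul_exp_of_hasDerivAt_le {f f' K K' : ℝ → ℝ} (hf : ∀ s, HasDerivAt f (f' s) s)
    (hK : ∀ s, HasDerivAt K (K' s) s) (hle : ∀ s, 0 ≤ s → f' s ≤ K' s * f s) {s : ℝ}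
    (hs : 0 ≤ s) : f s ≤ f 0 * Real.exp (K s - K 0) := by
  have hderiv (u : ℝ) : HasDerivAt (fun u => f u * Real.exp (-K u))
      ((f' u - K' u * f u) * Real.exp (-K u)) u :=
    ((hf u).mul (hK u).fun_neg.exp).congr_deriv (by ring)
  have hanti : AntitoneOn (fun u => f u * Real.exp (-K u)) (Set.Ici 0) := by
    refine antitoneOn_of_deriv_nonpos (convex_Ici 0)
      (fun u _ => (hderiv u).continuousAt.continuousWithinAt)
      (fun u _ => (hderiv u).differentiableAt.differentiableWithinAt) fun u hu => ?_
    rw [interior_Ici] at hu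
    rw [(hderiv u).deriv]
    exact mul_nonpos_of_nonpos_of_nonneg (sub_nonpos.2 (hle u (le_of_lt hu))) (Real.exp_pos _).le
  calc f s = f s * Real.exp (-K s) * Real.exp (K s) := by
        rw [mul_assoc, ← Real.exp_add, neg_add_cancel, Real.exp_zero, mul_one]
    _ ≤ f 0 * Real.exp (-K 0) * Real.exp (K s) :=
        mul_le_mul_of_nonneg_right (hanti Set.self_mem_Ici hs hs) (Real.exp_pos _).le
    _ = f 0 * Real.exp (K s - K 0) := by
        rw [mul_assoc, ← Real.exp_add, neg_add_eq_sub]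

variable {α ι : Type*}

lemma one_sub_mul_binomialExpect_le (S : Finset α) {p : ℝ} (hp : p ∈ Set.Icc 0 1) (s : ℝ)
    (Y : Finset α → ℝ) :
    1 - s * binomialExpect S p Y ≤ binomialExpect S p fun E => Real.exp (-(s * Y E)) := by
  have hlin : binomialExpect S p (1 - s • Y) = 1 - s * binomialExpect S p Y := by
    rw [map_sub, map_smul, binomialExpect_one, smul_eq_mul]
  rw [← hlin]
  exact binomialExpect_mono S hp fun E => Real.one_sub_le_exp_neg (s * Y E)

lemma hasDerivAt_binomialExpect_exp (S : Finset α) (p : ℝ) (X : Finset α → ℝ) (s : ℝ) :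
    HasDerivAt (fun s => binomialExpect S p fun E => Real.exp (-(s * X E)))
      (-binomialExpect S p fun E => X E * Real.exp (-(s * X E))) s := by
  simp only [binomialExpect_apply, ← sum_neg_distrib]
  refine HasDerivAt.fun_sum fun E _ => ?_
  exact ((hasDerivAt_mul_const (X E)).fun_neg.exp.const_mul _).congr_deriv (by ring)

variable [DecidableEq α]

/-- The number of `i ∈ T` for which the set `A i` is contained in `E`; the random variable `X` of
Janson's inequality, hence real-valued. -/
def containCount (T : Finset ι) (A : ι → Finset α) (E : Finset α) : ℝ :=
  #{i ∈ T | A i ⊆ E}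

/-- Janson's `Δ`: the sum of `ℙ(A i ∪ A j ⊆ E)` over the ordered pairs with `A i ∩ A j ≠ ∅`,
the diagonal included. -/
noncomputable def jansonDelta (T : Finset ι) (A : ι → Finset α) (p : ℝ) : ℝ :=
  ∑ i ∈ T, ∑ j ∈ T with ¬ Disjoint (A i) (A j), p ^ #(A i ∪ A j)

variable {S : Finset α} {p : ℝ} {T : Finset ι} {A : ι → Finset α}

lemma containCount_eq_sum_indicator (T : Finset ι) (A : ι → Finset α) :
    containCount T A = ∑ i ∈ T, {E | A i ⊆ E}.indicator 1 := by
  funext E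
  simp [containCount, Finset.sum_apply, Set.indicator]

lemma containCount_mono (T : Finset ι) (A : ι → Finset α) : Monotone (containCount T A) :=
  fun _ _ h => Nat.cast_le.2 (card_le_card (monotone_filter_right T fun _ _ hi => hi.trans h))

lemma containCount_le_of_subset {T' : Finset ι} (h : T' ⊆ T) (A : ι → Finset α) :
    containCount T' A ≤ containCount T A :=
  fun _ => Nat.cast_le.2 (card_le_card (filter_subset_filter _ h))

lemma containCount_union (T : Finset ι) (A : ι → Finset α) (B E : Finset α) :
    containCount T A (E ∪ B) = containCount {j ∈ T | ¬ Disjoint B (A j)} A (E ∪ B) +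
      containCount {j ∈ T | Disjoint B (A j)} A E := by
  have hfar : {j ∈ T | Disjoint B (A j) ∧ A j ⊆ E} = {j ∈ T | Disjoint B (A j) ∧ A j ⊆ E ∪ B} :=
    filter_congr fun j _ => and_congr_right fun hd =>
      ⟨fun h => h.trans subset_union_left, fun h => hd.symm.left_le_of_le_sup_right h⟩
  simp only [containCount, filter_filter, hfar]
  rw [← card_filter_add_card_filter_not (s := {j ∈ T | A j ⊆ E ∪ B})
    (fun j => Disjoint B (A j)), filter_filter, filter_filter, Nat.cast_add, add_comm]
  simp only [and_comm]

lemma pow_card_mul_binomialExpect_containCount_union {B : Finset α} (hB : B ⊆ S)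
    (hA : ∀ j ∈ T, A j ⊆ S) (p : ℝ) :
    p ^ #B * binomialExpect S p (fun E => containCount T A (E ∪ B)) =
      ∑ j ∈ T, p ^ #(B ∪ A j) := by
  have hpair (j : ι) : {E | B ⊆ E}.indicator ({E | A j ⊆ E}.indicator (1 : Finset α → ℝ)) =
      {E | B ∪ A j ⊆ E}.indicator 1 := by
    rw [Set.indicator_indicator]
    congr 1
    ext E
    exact union_subset_iff.symm
  have hsum : {E | B ⊆ E}.indicator (containCount T A) =
      ∑ j ∈ T, {E | B ∪ A j ⊆ E}.indicator 1 := by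
    simp only [← hpair, containCount_eq_sum_indicator]
    exact map_sum (Set.indicatorHom ℝ {E | B ⊆ E}) _ T
  rw [← binomialExpect_indicator_superset hB, hsum, map_sum]
  refine sum_congr rfl fun j hj => ?_
  rw [binomialExpect_indicator_superset (union_subset hB (hA j hj))]
  exact (congrArg _ (binomialExpect_one S p)).trans (mul_one _)

-- Given `A i ⊆ E`, the sets disjoint from `A i` are decoupled from the rest by the Harris
-- inequality, and `exp (-y) ≥ 1 - y` is enough for the sets that meet `A i`.
lemma sub_mul_binomialExpect_exp_le (hp : p ∈ Set.Icc 0 1) (hA : ∀ i ∈ T, A i ⊆ S) {s : ℝ}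
    (hs : 0 ≤ s) {i : ι} (hi : i ∈ T) :
    (p ^ #(A i) - s * ∑ j ∈ T with ¬ Disjoint (A i) (A j), p ^ #(A i ∪ A j)) *
        binomialExpect S p (fun E => Real.exp (-(s * containCount T A E))) ≤
      binomialExpect S p
        ({E | A i ⊆ E}.indicator fun E => Real.exp (-(s * containCount T A E))) := by
  set Y : Finset α → ℝ := fun E => containCount {j ∈ T | ¬ Disjoint (A i) (A j)} A (E ∪ A i)
  set Z : Finset α → ℝ := containCount {j ∈ T | Disjoint (A i) (A j)} A
  set L := binomialExpect S p fun E => Real.exp (-(s * containCount T A E))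
  have hL₀ : 0 ≤ L := binomialExpect_nonneg S hp fun E => (Real.exp_pos _).le
  have hY : Monotone Y := (containCount_mono _ A).comp fun _ _ h => union_subset_union_left h
  have hLZ : L ≤ binomialExpect S p fun E => Real.exp (-(s * Z E)) :=
    binomialExpect_mono S hp fun E => antitone_exp_neg_mul hs monotone_id
      (containCount_le_of_subset (filter_subset _ T) A E)
  have hsplit : (fun E => Real.exp (-(s * containCount T A (E ∪ A i)))) =
      (fun E => Real.exp (-(s * Y E))) * fun E => Real.exp (-(s * Z E)) := by
    funext E
    rw [containCount_union, Pi.mul_apply, ← Real.exp_add]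
    congr 1
    ring
  have hnear := pow_card_mul_binomialExpect_containCount_union (hA i hi)
    (fun j hj => hA j (mem_filter.1 hj).1) p (T := {j ∈ T | ¬ Disjoint (A i) (A j)})
  rw [binomialExpect_indicator_superset (hA i hi), ← hnear, hsplit]
  calc (p ^ #(A i) - s * (p ^ #(A i) * binomialExpect S p Y)) * L
      = p ^ #(A i) * ((1 - s * binomialExpect S p Y) * L) := by ring
    _ ≤ p ^ #(A i) * (binomialExpect S p (fun E => Real.exp (-(s * Y E))) *
          binomialExpect S p (fun E => Real.exp (-(s * Z E)))) := by
        refine mul_le_mul_of_nonneg_left ?_ (pow_nonneg hp.1 _)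
        exact mul_le_mul (one_sub_mul_binomialExpect_le S hp s Y) hLZ hL₀
          (binomialExpect_nonneg S hp fun E => (Real.exp_pos _).le)
    _ ≤ _ := mul_le_mul_of_nonneg_left
        (binomialExpect_mul_le_of_antitone S hp (fun _ => (Real.exp_pos _).le)
          (fun _ => (Real.exp_pos _).le) (antitone_exp_neg_mul hs hY)
          (antitone_exp_neg_mul hs (containCount_mono _ A))) (pow_nonneg hp.1 _)

lemma binomialExpect_exp_neg_containCount_le (hp : p ∈ Set.Icc 0 1) (hA : ∀ i ∈ T, A i ⊆ S)
    {s : ℝ} (hs : 0 ≤ s) :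
    binomialExpect S p (fun E => Real.exp (-(s * containCount T A E))) ≤
      Real.exp (s ^ 2 / 2 * jansonDelta T A p - s * ∑ i ∈ T, p ^ #(A i)) := by
  set X := containCount T A
  set Δ := jansonDelta T A p with hΔ
  set μ := ∑ i ∈ T, p ^ #(A i) with hμ
  have hdecomp (s : ℝ) : (fun E => X E * Real.exp (-(s * X E))) =
      ∑ i ∈ T, {E | A i ⊆ E}.indicator fun E => Real.exp (-(s * X E)) := by
    funext E
    have hXE : X E = ∑ i ∈ T, if A i ⊆ E then 1 else 0 := by
      simp [X, containCount_eq_sum_indicator, Set.indicator]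
    simp only [Finset.sum_apply, Set.indicator, Set.mem_ofPred_eq]
    generalize Real.exp (-(s * X E)) = y
    simp only [hXE, sum_mul, ite_mul, one_mul, zero_mul]
  have hode (s : ℝ) (hs : 0 ≤ s) : -binomialExpect S p (fun E => X E * Real.exp (-(s * X E))) ≤
      (s * Δ - μ) * binomialExpect S p (fun E => Real.exp (-(s * X E))) := by
    have hsum := sum_le_sum fun i hi => sub_mul_binomialExpect_exp_le hp hA hs (i := i) hi
    rw [← sum_mul, sum_sub_distrib, ← mul_sum, ← map_sum, ← hdecomp] at hsum
    rw [hΔ, hμ, jansonDelta]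
    linarith
  have hexponent (s : ℝ) : HasDerivAt (fun s => s ^ 2 / 2 * Δ - s * μ) (s * Δ - μ) s :=
    ((((hasDerivAt_id s).pow 2).div_const 2).mul_const Δ).sub ((hasDerivAt_id s).mul_const μ)
      |>.congr_deriv (by simp)
  have hone : binomialExpect S p (fun _ => 1) = 1 := binomialExpect_one S p
  simpa [hone] using le_mul_exp_of_hasDerivAt_le (hasDerivAt_binomialExpect_exp S p X)
    hexponent hode hs

theorem janson_lower_tail (hp : p ∈ Set.Icc 0 1) (hA : ∀ i ∈ T, A i ⊆ S) {t Δ : ℝ} (ht : 0 ≤ t)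
    (hΔ₀ : 0 < Δ) (hΔ : jansonDelta T A p ≤ Δ) :
    binomialExpect S p ({E | containCount T A E ≤ ∑ i ∈ T, p ^ #(A i) - t}.indicator 1) ≤
      Real.exp (-(t ^ 2 / (2 * Δ))) := by
  set μ := ∑ i ∈ T, p ^ #(A i)
  set s := t / Δ with hs
  have hs₀ : 0 ≤ s := by positivity
  have hmarkov : {E | containCount T A E ≤ μ - t}.indicator 1 ≤
      Real.exp (s * (μ - t)) • fun E => Real.exp (-(s * containCount T A E)) := by
    refine Set.indicator_le' (fun E hE => ?_) fun E _ =>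
      (mul_pos (Real.exp_pos _) (Real.exp_pos _)).le
    rw [Pi.smul_apply, smul_eq_mul, ← Real.exp_add]
    exact Real.one_le_exp (by nlinarith [mul_le_mul_of_nonneg_left hE hs₀])
  calc binomialExpect S p ({E | containCount T A E ≤ μ - t}.indicator 1)
      ≤ Real.exp (s * (μ - t)) *
          binomialExpect S p (fun E => Real.exp (-(s * containCount T A E))) := by
        simpa only [map_smul, smul_eq_mul] using binomialExpect_mono S hp hmarkov
    _ ≤ Real.exp (s * (μ - t)) * Real.exp (s ^ 2 / 2 * Δ - s * μ) := by
        gcongr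
        refine (binomialExpect_exp_neg_containCount_le hp hA hs₀).trans ?_
        gcongr
    _ = Real.exp (-(t ^ 2 / (2 * Δ))) := by
        rw [← Real.exp_add, hs]
        congr 1
        field_simp
        ring

end Janson

/-! ### Copies of a hypergraph -/

section Copies

variable {α β : Type*} [DecidableEq α]

/-- The edge set of the copy of the hypergraph `F` spanned by the tuple `w`. -/
def copyEdges (F : Finset (Finset β)) (w : β → α) : Finset (Finset α) :=
  F.image (Finset.image w)

/-- The edges of `F` that the tuple `w'` maps to edges of the copy of `F` spanned by `w`. -/
def sharedEdges (F : Finset (Finset β)) (w w' : β → α) : Finset (Finset β) :=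
  {e ∈ F | e.image w' ∈ copyEdges F w}

variable {F : Finset (Finset β)} {w w' : β → α} {n : ℕ} {p : ℝ}

lemma spansCopy_iff {s : ℕ} {F : Finset (Finset (Fin s))} {E : Finset (Finset (Fin n))}
    {w : Fin s → Fin n} : SpansCopy F E w ↔ copyEdges F w ⊆ E :=
  image_subset_iff.symm

lemma card_copyEdges (F : Finset (Finset β)) (hw : Function.Injective w) :
    #(copyEdges F w) = #F :=
  card_image_of_injective F (image_injective hw)

lemma copyEdges_subset_kSets {k : ℕ} {w : β → Fin n} (hF : ∀ e ∈ F, #e = k)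
    (hw : Function.Injective w) : copyEdges F w ⊆ kSets n k :=
  image_subset_iff.2 fun e he => mem_powersetCard_univ.2 <| by
    rw [card_image_of_injective e hw, hF e he]

lemma copyEdges_inter_copyEdges (F : Finset (Finset β)) (w w' : β → α) :
    copyEdges F w ∩ copyEdges F w' = copyEdges (sharedEdges F w w') w' := by
  ext e
  simp only [copyEdges, sharedEdges, mem_inter, mem_image, mem_filter]
  grind

lemma card_copyEdges_union (F : Finset (Finset β)) (hw : Function.Injective w)
    (hw' : Function.Injective w') :
    #(copyEdges F w ∪ copyEdges F w') + #(sharedEdges F w w') = 2 * #F := by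
  rw [← card_copyEdges (sharedEdges F w w') hw', ← copyEdges_inter_copyEdges,
    card_union_add_card_inter, card_copyEdges F hw, card_copyEdges F hw', two_mul]

lemma sharedEdges_nonempty_iff :
    (sharedEdges F w w').Nonempty ↔ ¬ Disjoint (copyEdges F w) (copyEdges F w') := by
  rw [not_disjoint_iff_nonempty_inter, copyEdges_inter_copyEdges, copyEdges, image_nonempty]

lemma card_filter_forall_mem [Fintype α] [Fintype β] (U : Finset β) (R : Finset α) :
    #{f : β → α | ∀ m ∈ U, f m ∈ R} = #R ^ #U * Fintype.card α ^ (Fintype.card β - #U) := by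
  have hpi : ({f : β → α | ∀ m ∈ U, f m ∈ R} : Finset (β → α)) =
      Fintype.piFinset fun m => if m ∈ U then R else univ := by
    ext f
    simp only [mem_filter_univ, Fintype.mem_piFinset]
    exact forall_congr' fun m => by split_ifs with hm <;> simp [hm]
  rw [hpi, Fintype.card_piFinset]
  simp only [apply_ite card, prod_ite, prod_const, card_univ, filter_univ_mem, filter_not,
    card_univ_sdiff]

lemma Phi_le {V : Type*} {F J : Finset (Finset V)} {W : Finset V} (n : ℕ) (hp : 0 ≤ p)
    (hJF : J ⊆ F) (hJ : J.Nonempty) (hW : ∀ e ∈ J, e ⊆ W) :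
    Phi n p F ≤ (n : ℝ) ^ #W * p ^ #J := by
  refine csInf_le ⟨0, ?_⟩ ⟨W, J, hJF, hJ, hW, rfl⟩
  rintro _ ⟨W, J, -, -, -, rfl⟩
  positivity

lemma le_Phi {V : Type*} {F : Finset (Finset V)} (hF : F.Nonempty) {r : ℝ}
    (h : ∀ J ⊆ F, J.Nonempty → ∀ W, (∀ e ∈ J, e ⊆ W) → r ≤ (n : ℝ) ^ #W * p ^ #J) :
    r ≤ Phi n p F := by
  refine le_csInf ⟨_, F.biUnion id, F, subset_rfl, hF, fun _ => subset_biUnion_of_mem id, rfl⟩ ?_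
  rintro _ ⟨W, J, hJF, hJ, hW, rfl⟩
  exact h J hJF hJ W hW

variable [Fintype α] [Fintype β]

-- If the edges in `J` are mapped into the copy spanned by `w`, the vertices covered by `J` are
-- mapped into the image of `w`.
lemma Phi_mul_card_filter_subset_sharedEdges_le {J : Finset (Finset β)} (hp : 0 ≤ p)
    (hJF : J ⊆ F) (hJ : J.Nonempty) (w : β → α) :
    Phi (Fintype.card α) p F * #{w' : β → α | J ⊆ sharedEdges F w w'} ≤
      (Fintype.card β : ℝ) ^ Fintype.card β * (Fintype.card α : ℝ) ^ Fintype.card β * p ^ #J := by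
  set n := Fintype.card α
  set s := Fintype.card β
  set U := J.biUnion id
  have hU : #U ≤ s := card_le_univ U
  have hrange : ({w' : β → α | J ⊆ sharedEdges F w w'} : Finset (β → α)) ⊆
      ({w' | ∀ m ∈ U, w' m ∈ univ.image w} : Finset (β → α)) := by
    refine monotone_filter_right _ fun w' _ hw' m hm => ?_
    obtain ⟨e, he, hme⟩ := mem_biUnion.1 hm
    obtain ⟨e', -, he'⟩ := mem_image.1 (mem_filter.1 (hw' he)).2
    exact image_subset_image (subset_univ e') (he' ▸ mem_image_of_mem w' hme)
  have hpow : #(univ.image w) ^ #U ≤ s ^ s := by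
    have himage : #(univ.image w) ≤ s := card_image_le
    rcases s.eq_zero_or_pos with hs | hs
    · simp [Nat.le_zero.1 (hs ▸ hU), hs]
    · exact (Nat.pow_le_pow_left himage _).trans (Nat.pow_le_pow_right hs hU)
  have hcard : #{w' : β → α | J ⊆ sharedEdges F w w'} ≤ s ^ s * n ^ (s - #U) :=
    (card_le_card hrange).trans <|
      (card_filter_forall_mem U (univ.image w)).trans_le (Nat.mul_le_mul_right _ hpow)
  calc Phi n p F * #{w' : β → α | J ⊆ sharedEdges F w w'}
      ≤ ((n : ℝ) ^ #U * p ^ #J) * ((s : ℝ) ^ s * (n : ℝ) ^ (s - #U)) := by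
        gcongr
        · exact Phi_le n hp hJF hJ fun _ => subset_biUnion_of_mem id
        · exact_mod_cast hcard
    _ = (s : ℝ) ^ s * ((n : ℝ) ^ #U * (n : ℝ) ^ (s - #U)) * p ^ #J := by ring
    _ = (s : ℝ) ^ s * (n : ℝ) ^ s * p ^ #J := by rw [← pow_add, Nat.add_sub_cancel' hU]

lemma sum_pow_card_copyEdges_union_le_of_sharedEdges_eq {T : Finset (β → α)}
    {J : Finset (Finset β)} (hp : 0 < p) (hPhi : 0 < Phi (Fintype.card α) p F) (hJF : J ⊆ F)
    (hJ : J.Nonempty) (hw : Function.Injective w)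
    (hT : ∀ w' ∈ T, Function.Injective w' ∧ sharedEdges F w w' = J) :
    ∑ w' ∈ T, p ^ #(copyEdges F w ∪ copyEdges F w') ≤
      (Fintype.card β : ℝ) ^ Fintype.card β * (Fintype.card α : ℝ) ^ Fintype.card β *
        p ^ (2 * #F) / Phi (Fintype.card α) p F := by
  set C := (Fintype.card β : ℝ) ^ Fintype.card β * (Fintype.card α : ℝ) ^ Fintype.card β
  have hterm : ∀ w' ∈ T, p ^ #(copyEdges F w ∪ copyEdges F w') ≤ p ^ (2 * #F) / p ^ #J := by
    intro w' hw'
    obtain ⟨hinj, hshared⟩ := hT w' hw'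
    rw [le_div_iff₀ (pow_pos hp _), ← pow_add, ← hshared, card_copyEdges_union F hw hinj]
  have hT_le : (#T : ℝ) ≤ #{w' : β → α | J ⊆ sharedEdges F w w'} :=
    Nat.cast_le.2 <| card_le_card fun w' hw' => mem_filter.2 ⟨mem_univ w', (hT w' hw').2.ge⟩
  have hcount : (#T : ℝ) ≤ C * p ^ #J / Phi (Fintype.card α) p F := by
    rw [le_div_iff₀' hPhi]
    exact (mul_le_mul_of_nonneg_left hT_le hPhi.le).trans
      (Phi_mul_card_filter_subset_sharedEdges_le hp.le hJF hJ w)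
  calc ∑ w' ∈ T, p ^ #(copyEdges F w ∪ copyEdges F w')
      ≤ #T * (p ^ (2 * #F) / p ^ #J) := by
        simpa only [nsmul_eq_mul] using sum_le_card_nsmul _ _ _ hterm
    _ ≤ C * p ^ #J / Phi (Fintype.card α) p F * (p ^ (2 * #F) / p ^ #J) := by gcongr
    _ = C * p ^ (2 * #F) / Phi (Fintype.card α) p F := by field_simp

lemma sum_pow_card_copyEdges_union_le {T : Finset (β → α)} (hp : 0 < p)
    (hPhi : 0 < Phi (Fintype.card α) p F) (hT : ∀ w' ∈ T, Function.Injective w')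
    (hw : Function.Injective w) :
    ∑ w' ∈ T with ¬ Disjoint (copyEdges F w) (copyEdges F w'),
        p ^ #(copyEdges F w ∪ copyEdges F w') ≤
      2 ^ #F * ((Fintype.card β : ℝ) ^ Fintype.card β *
        (Fintype.card α : ℝ) ^ Fintype.card β * p ^ (2 * #F) / Phi (Fintype.card α) p F) := by
  set C := (Fintype.card β : ℝ) ^ Fintype.card β * (Fintype.card α : ℝ) ^ Fintype.card β *
    p ^ (2 * #F) / Phi (Fintype.card α) p F
  simp only [← sharedEdges_nonempty_iff]
  have hmaps : ∀ w' ∈ T.filter (fun w' => (sharedEdges F w w').Nonempty),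
      sharedEdges F w w' ∈ {J ∈ F.powerset | J.Nonempty} := fun w' hw' =>
    mem_filter.2 ⟨mem_powerset.2 (filter_subset _ F), (mem_filter.1 hw').2⟩
  rw [← sum_fiberwise_of_maps_to hmaps]
  refine (sum_le_card_nsmul _ _ C fun J hJ => ?_).trans ?_
  · obtain ⟨hJF, hJ⟩ := mem_filter.1 hJ
    refine sum_pow_card_copyEdges_union_le_of_sharedEdges_eq hp hPhi (mem_powerset.1 hJF) hJ hw ?_
    intro w' hw'
    simp only [mem_filter] at hw'
    exact ⟨hT w' hw'.1.1, hw'.2⟩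
  · rw [nsmul_eq_mul]
    gcongr
    exact_mod_cast (card_filter_le _ _).trans (card_powerset F).le

end Copies

/-! ### Many copies in every family -/

section Families

variable {n s k : ℕ} {p : ℝ}

lemma gProb_eq_binomialExpect (n k : ℕ) (p : ℝ) (A : Finset (Finset (Fin n)) → Prop) :
    gProb n k p A = binomialExpect (kSets n k) p ({E | A E}.indicator 1) := by
  simp [gProb, binomialExpect_apply, binomialWeight, Set.indicator, sum_filter]

lemma gProb_mono (hp : p ∈ Set.Icc 0 1) {A B : Finset (Finset (Fin n)) → Prop}
    (hAB : ∀ E, A E → B E) : gProb n k p A ≤ gProb n k p B := by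
  simp only [gProb_eq_binomialExpect]
  exact binomialExpect_mono _ hp
    (Set.indicator_le_indicator_of_subset hAB fun _ => zero_le_one)

lemma one_sub_sum_gProb_not_le {ι : Type*} [Fintype ι] (hp : p ∈ Set.Icc 0 1)
    (A : ι → Finset (Finset (Fin n)) → Prop) :
    1 - ∑ i, gProb n k p (fun E => ¬ A i E) ≤ gProb n k p fun E => ∀ i, A i E := by
  have hpointwise : 1 - ∑ i, {E | ¬ A i E}.indicator (1 : Finset (Finset (Fin n)) → ℝ) ≤
      {E | ∀ i, A i E}.indicator 1 := by
    intro E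
    have hnonneg : ∀ i ∈ univ, 0 ≤ {E | ¬ A i E}.indicator (1 : Finset (Finset (Fin n)) → ℝ) E :=
      fun i _ => Set.indicator_nonneg (fun _ _ => zero_le_one) E
    simp only [Pi.sub_apply, Pi.one_apply, Finset.sum_apply]
    by_cases hE : ∀ i, A i E
    · rw [Set.indicator_of_mem (show E ∈ {E | ∀ i, A i E} from hE)]
      exact sub_le_self _ (sum_nonneg hnonneg)
    · obtain ⟨i, hi⟩ := not_forall.1 hE
      rw [Set.indicator_of_notMem (show E ∉ {E | ∀ i, A i E} from hE), sub_nonpos]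
      exact (Set.indicator_of_mem (show E ∈ {E | ¬ A i E} from hi) 1).ge.trans
        (single_le_sum hnonneg (mem_univ i))
  simp only [gProb_eq_binomialExpect]
  rw [← binomialExpect_one (kSets n k) p, ← map_sum, ← map_sub]
  exact binomialExpect_mono _ hp hpointwise

lemma jansonDelta_copyEdges_le {F : Finset (Finset (Fin s))} {T : Finset (Fin s → Fin n)}
    (hp : 0 < p) (hPhi : 0 < Phi n p F) (hT : ∀ w ∈ T, Function.Injective w) :
    jansonDelta T (copyEdges F) p ≤
      #T * (2 ^ #F * ((s : ℝ) ^ s * (n : ℝ) ^ s * p ^ (2 * #F) / Phi n p F)) := by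
  rw [← nsmul_eq_mul]
  refine sum_le_card_nsmul _ _ _ fun w hw => ?_
  have hPhi' : 0 < Phi (Fintype.card (Fin n)) p F := by rwa [Fintype.card_fin]
  simpa only [Fintype.card_fin] using sum_pow_card_copyEdges_union_le hp hPhi' hT (hT w hw)

lemma gProb_card_spansCopy_lt_le {F : Finset (Finset (Fin s))} {T : Finset (Fin s → Fin n)}
    {γ : ℝ} (hp : 0 < p) (hp₁ : p ≤ 1) (hF : ∀ e ∈ F, #e = k) (hPhi : 0 < Phi n p F) (hγ : 0 < γ)
    (hn : 0 < n) (hT : ∀ w ∈ T, Function.Injective w) (hcard : γ * (n : ℝ) ^ s ≤ #T) :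
    gProb n k p (fun E => (#{w ∈ T | SpansCopy F E w} : ℝ) < γ / 2 * p ^ #F * (n : ℝ) ^ s) ≤
      Real.exp (-(γ / (8 * 2 ^ #F * (s : ℝ) ^ s) * Phi n p F)) := by
  have hT₀ : (0 : ℝ) < #T := lt_of_lt_of_le (by positivity) hcard
  have hs : (0 : ℝ) < (s : ℝ) ^ s := by exact_mod_cast Nat.pow_self_pos
  set μ := ∑ w ∈ T, p ^ #(copyEdges F w) with hμ
  have hμ_eq : μ = #T * p ^ #F := by
    rw [hμ, sum_congr rfl fun w hw => by rw [card_copyEdges F (hT w hw)], sum_const, nsmul_eq_mul]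
  have hμ_ge : γ * (n : ℝ) ^ s * p ^ #F ≤ μ := hμ_eq ▸ by gcongr
  set Δ := #T * (2 ^ #F * ((s : ℝ) ^ s * (n : ℝ) ^ s * p ^ (2 * #F) / Phi n p F))
  have hΔ₀ : 0 < Δ := by positivity
  have hevent (E : Finset (Finset (Fin n)))
      (hE : (#{w ∈ T | SpansCopy F E w} : ℝ) < γ / 2 * p ^ #F * (n : ℝ) ^ s) :
      containCount T (copyEdges F) E ≤ μ - μ / 2 := by
    simp only [spansCopy_iff] at hE
    rw [containCount]
    linarith
  have hexponent : γ / (8 * 2 ^ #F * (s : ℝ) ^ s) * Phi n p F ≤ (μ / 2) ^ 2 / (2 * Δ) := by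
    calc γ / (8 * 2 ^ #F * (s : ℝ) ^ s) * Phi n p F
        = γ * (n : ℝ) ^ s * (Phi n p F / (8 * 2 ^ #F * (s : ℝ) ^ s * (n : ℝ) ^ s)) := by
          field_simp
      _ ≤ #T * (Phi n p F / (8 * 2 ^ #F * (s : ℝ) ^ s * (n : ℝ) ^ s)) := by gcongr
      _ = (μ / 2) ^ 2 / (2 * Δ) := by
          rw [hμ_eq]
          simp only [Δ]
          field_simp
          ring
  calc _ ≤ gProb n k p fun E => containCount T (copyEdges F) E ≤ μ - μ / 2 :=
        gProb_mono ⟨hp.le, hp₁⟩ hevent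
    _ ≤ Real.exp (-((μ / 2) ^ 2 / (2 * Δ))) := by
        rw [gProb_eq_binomialExpect]
        exact janson_lower_tail ⟨hp.le, hp₁⟩
          (fun w hw => copyEdges_subset_kSets hF (hT w hw)) (by positivity) hΔ₀
          (jansonDelta_copyEdges_le hp hPhi hT)
    _ ≤ _ := Real.exp_le_exp.2 (neg_le_neg hexponent)

lemma eventually_pow_mul_exp_neg_le (m : ℕ) {c q r : ℝ} (hc : 0 < c) (hr : 0 < r) (hqr : q < r) :
    ∀ᶠ y : ℝ in Filter.atTop, y ^ m * Real.exp (-(c * y ^ r)) ≤ Real.exp (-(y ^ q)) := by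
  have hlog := (isLittleO_log_rpow_atTop hr).const_mul_left (m : ℝ) |>.def (half_pos hc)
  have hpow := (tendsto_rpow_atTop (sub_pos.2 hqr)).eventually_ge_atTop (2 / c)
  filter_upwards [hlog, hpow, Filter.eventually_gt_atTop 0] with y hlog hpow hy
  have hlog' : m * Real.log y ≤ c / 2 * y ^ r :=
    (le_abs_self _).trans (hlog.trans_eq (by rw [Real.norm_of_nonneg (by positivity)]))
  have hpow' : y ^ q ≤ c / 2 * y ^ r := by
    calc y ^ q = c / 2 * (y ^ q * (2 / c)) := by field_simp
      _ ≤ c / 2 * (y ^ q * y ^ (r - q)) := by gcongr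
      _ = c / 2 * y ^ r := by rw [← Real.rpow_add hy, add_sub_cancel]
  calc y ^ m * Real.exp (-(c * y ^ r))
      = Real.exp (m * Real.log y - c * y ^ r) := by
        rw [sub_eq_add_neg, Real.exp_add, Real.exp_nat_mul, Real.exp_log hy]
    _ ≤ Real.exp (-(y ^ q)) := Real.exp_le_exp.2 (by linarith)

theorem many_spansCopy_in_each_family {F : Finset (Finset (Fin s))} (hF : ∀ e ∈ F, #e = k)
    (m : ℕ) {γ : ℝ} (hγ : 0 < γ) :
    ∀ᶠ n : ℕ in Filter.atTop, ∀ p : ℝ, 0 < p → p ≤ 1 → (n : ℝ) ^ (1 / 2 : ℝ) ≤ Phi n p F →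
      ∀ t ≤ n ^ m, ∀ ℱ : Fin t → Finset (Fin s → Fin n),
        (∀ i, (∀ w ∈ ℱ i, Function.Injective w) ∧ γ * (n : ℝ) ^ s ≤ #(ℱ i)) →
          1 - Real.exp (-((n : ℝ) ^ (1 / 3 : ℝ))) ≤
            gProb n k p fun E => ∀ i,
              γ / 2 * p ^ #F * (n : ℝ) ^ s ≤ #{w ∈ ℱ i | SpansCopy F E w} := by
  have hs : (0 : ℝ) < (s : ℝ) ^ s := by exact_mod_cast Nat.pow_self_pos
  set c := γ / (8 * 2 ^ #F * (s : ℝ) ^ s)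
  have hc : 0 < c := by positivity
  filter_upwards [tendsto_natCast_atTop_atTop.eventually
    (eventually_pow_mul_exp_neg_le m hc one_half_pos (by norm_num : (1 / 3 : ℝ) < 1 / 2)),
    Filter.eventually_gt_atTop 0] with n hasymp hn p hp hp₁ hPhi t ht ℱ hℱ
  have hPhi₀ : 0 < Phi n p F := lt_of_lt_of_le (by positivity) hPhi
  have htail (i : Fin t) : gProb n k p (fun E => ¬ γ / 2 * p ^ #F * (n : ℝ) ^ s ≤
      #{w ∈ ℱ i | SpansCopy F E w}) ≤ Real.exp (-(c * (n : ℝ) ^ (1 / 2 : ℝ))) := by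
    simp only [not_le]
    refine (gProb_card_spansCopy_lt_le hp hp₁ hF hPhi₀ hγ hn (hℱ i).1 (hℱ i).2).trans ?_
    gcongr
  refine le_trans (sub_le_sub_left ?_ 1) (one_sub_sum_gProb_not_le ⟨hp.le, hp₁⟩ _)
  calc _ ≤ t * Real.exp (-(c * (n : ℝ) ^ (1 / 2 : ℝ))) := by
        simpa using sum_le_card_nsmul univ _ _ fun i _ => htail i
    _ ≤ (n : ℝ) ^ m * Real.exp (-(c * (n : ℝ) ^ (1 / 2 : ℝ))) := by
        gcongr
        exact_mod_cast ht
    _ ≤ _ := hasymp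

end Families

/-! ### The path `P_{a,x}` -/

section Path

variable {k ℓ a i n : ℕ} {ε p : ℝ}

lemma edgeIdx_eq_Ico (k d x i : ℕ) : edgeIdx k d x i = Ico (x + i * d) (x + i * d + k) := by
  rw [edgeIdx, range_eq_Ico, image_add_left_Ico, add_zero]

lemma edgeIdx_injective {k d : ℕ} (hk : 0 < k) (hd : 0 < d) (x : ℕ) :
    Function.Injective (edgeIdx k d x) := by
  intro i j hij
  simp only [edgeIdx_eq_Ico] at hij
  have hi : x + i * d ∈ Ico (x + j * d) (x + j * d + k) := hij ▸ left_mem_Ico.2 (by omega)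
  have hj : x + j * d ∈ Ico (x + i * d) (x + i * d + k) := hij ▸ left_mem_Ico.2 (by omega)
  rw [mem_Ico] at hi hj
  exact Nat.eq_of_mul_eq_mul_right hd (by omega)

lemma mul_card_add_le_card_biUnion_edgeIdx {J : Finset ℕ} (hJ : J.Nonempty) (d ℓ x : ℕ) :
    d * #J + ℓ ≤ #(J.biUnion (edgeIdx (d + ℓ) d x)) := by
  induction J using Finset.induction_on_max with
  | empty => exact absurd hJ not_nonempty_empty
  | insert m J hm ih =>
    obtain rfl | hJ := J.eq_empty_or_nonempty
    · simp [edgeIdx_eq_Ico]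
    -- the last `d` vertices of the last edge lie in no other edge
    set new := Ico (x + m * d + ℓ) (x + m * d + (d + ℓ))
    have hnew : Disjoint (J.biUnion (edgeIdx (d + ℓ) d x)) new := by
      refine (disjoint_biUnion_left _ _ _).2 fun i hi => ?_
      have him : (i + 1) * d ≤ m * d := Nat.mul_le_mul_right d (hm i hi)
      rw [edgeIdx_eq_Ico]
      exact disjoint_left.2 fun y hy hy' => by
        simp only [new, mem_Ico] at hy hy'
        grind
    have hsub : J.biUnion (edgeIdx (d + ℓ) d x) ∪ new ⊆
        (insert m J).biUnion (edgeIdx (d + ℓ) d x) := by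
      rw [biUnion_insert, union_comm, edgeIdx_eq_Ico]
      exact union_subset_union_left (Ico_subset_Ico_left (by omega))
    calc d * #(insert m J) + ℓ = d * #J + ℓ + d := by
          rw [card_insert_of_notMem fun h => (hm m h).false]
          ring
      _ ≤ #(J.biUnion (edgeIdx (d + ℓ) d x)) + #new := by
          gcongr
          · exact ih hJ
          · rw [Nat.card_Ico]
            omega
      _ ≤ _ := (card_union_of_disjoint hnew).symm.trans_le (card_le_card hsub)

/-- The `i`-th edge of the path `P_{a,x}`, as a set of vertices of `P_{a,x}`. -/
def paxEdge (k ℓ a x i : ℕ) : Finset (Fin (2 * x + ℓ + (k - ℓ) * a)) :=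
  {m | (m : ℕ) ∈ edgeIdx k (k - ℓ) x i}

/-- The edge set of the path `P_{a,x}`. -/
def paxEdges (k ℓ a x : ℕ) : Finset (Finset (Fin (2 * x + ℓ + (k - ℓ) * a))) :=
  (range a).image (paxEdge k ℓ a x)

lemma spansPax_iff {x : ℕ} {E : Finset (Finset (Fin n))}
    {w : Fin (2 * x + ℓ + (k - ℓ) * a) → Fin n} :
    SpansPax k ℓ a x E w ↔ Function.Injective w ∧ SpansCopy (paxEdges k ℓ a x) E w := by
  simp only [SpansPax, SpansCopy, paxEdges, paxEdge, forall_mem_image, mem_range]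

lemma map_paxEdge (hlk : ℓ ≤ k) (hi : i < a) (x : ℕ) :
    (paxEdge k ℓ a x i).map Fin.valEmbedding = edgeIdx k (k - ℓ) x i := by
  have hbound : (i + 1) * (k - ℓ) ≤ (k - ℓ) * a :=
    (Nat.mul_le_mul_right _ hi).trans_eq (mul_comm _ _)
  ext m
  simp only [paxEdge, mem_map, mem_filter_univ, Fin.valEmbedding_apply]
  refine ⟨by rintro ⟨m, hm, rfl⟩; exact hm, fun hm => ⟨⟨m, ?_⟩, hm, rfl⟩⟩
  rw [edgeIdx_eq_Ico, mem_Ico] at hm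
  grind

lemma card_paxEdge (hlk : ℓ ≤ k) (hi : i < a) (x : ℕ) : #(paxEdge k ℓ a x i) = k := by
  rw [← card_map Fin.valEmbedding, map_paxEdge hlk hi, edgeIdx_eq_Ico, Nat.card_Ico,
    Nat.add_sub_cancel_left]

lemma card_of_mem_paxEdges {x : ℕ} (hlk : ℓ ≤ k) : ∀ e ∈ paxEdges k ℓ a x, #e = k :=
  forall_mem_image.2 fun _ hi => card_paxEdge hlk (mem_range.1 hi) x

lemma card_paxEdges (hlk : ℓ < k) (a x : ℕ) : #(paxEdges k ℓ a x) = a := by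
  have hinj : Set.InjOn (paxEdge k ℓ a x) (range a) := fun i hi j hj hij =>
    edgeIdx_injective (Nat.zero_lt_of_lt hlk) (Nat.sub_pos_of_lt hlk) x <| by
      rw [← map_paxEdge hlk.le (mem_range.1 hi), hij, map_paxEdge hlk.le (mem_range.1 hj)]
  rw [paxEdges, card_image_of_injOn hinj, card_range]

lemma mul_card_add_le_card_biUnion_paxEdge {J : Finset ℕ} (hlk : ℓ ≤ k) (hJ : J.Nonempty)
    (hJa : J ⊆ range a) (x : ℕ) :
    (k - ℓ) * #J + ℓ ≤ #(J.biUnion (paxEdge k ℓ a x)) := by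
  have hmap : (J.biUnion (paxEdge k ℓ a x)).map Fin.valEmbedding =
      J.biUnion (edgeIdx k (k - ℓ) x) := by
    rw [map_eq_image, biUnion_image]
    exact biUnion_congr rfl fun i hi =>
      (map_eq_image _ _).symm.trans (map_paxEdge hlk (mem_range.1 (hJa hi)) x)
  rw [← card_map Fin.valEmbedding, hmap]
  simpa only [Nat.sub_add_cancel hlk] using
    mul_card_add_le_card_biUnion_edgeIdx hJ (k - ℓ) ℓ x

lemma rpow_half_le_pow_mul_pow {d j v : ℕ} (hn : 1 ≤ n) (hε : ε ≤ (ℓ : ℝ) / (2 * a))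
    (hp : (n : ℝ) ^ (-(d : ℝ) - ε) ≤ p) (hj : j ≤ a) (hv : d * j + ℓ ≤ v) :
    (n : ℝ) ^ (ℓ / 2 : ℝ) ≤ (n : ℝ) ^ v * p ^ j := by
  have hn₁ : (1 : ℝ) ≤ n := by exact_mod_cast hn
  have hn₀ : (0 : ℝ) < n := by linarith
  have hjε : j * ε ≤ ℓ / 2 := by
    calc j * ε ≤ j * ((ℓ : ℝ) / (2 * a)) := by gcongr
      _ = (j / a : ℝ) * (ℓ / 2) := by ring
      _ ≤ 1 * (ℓ / 2) := by
          gcongr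
          exact div_le_one_of_le₀ (by exact_mod_cast hj) (Nat.cast_nonneg a)
      _ = ℓ / 2 := one_mul _
  have hv' : (d : ℝ) * j + ℓ ≤ v := by exact_mod_cast hv
  calc (n : ℝ) ^ (ℓ / 2 : ℝ) ≤ (n : ℝ) ^ ((v : ℝ) + (-(d : ℝ) - ε) * j) :=
        Real.rpow_le_rpow_of_exponent_le hn₁ (by linarith)
    _ = (n : ℝ) ^ v * ((n : ℝ) ^ (-(d : ℝ) - ε)) ^ j := by
        rw [Real.rpow_add hn₀, Real.rpow_natCast, Real.rpow_mul hn₀.le, Real.rpow_natCast]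
    _ ≤ (n : ℝ) ^ v * p ^ j := by gcongr

lemma rpow_half_le_Phi_paxEdges (hlk : ℓ ≤ k) (ha : 0 < a) (hn : 1 ≤ n)
    (hε : ε ≤ (ℓ : ℝ) / (2 * a)) (hp : (n : ℝ) ^ (-((k : ℝ) - ℓ) - ε) ≤ p) (x : ℕ) :
    (n : ℝ) ^ (ℓ / 2 : ℝ) ≤ Phi n p (paxEdges k ℓ a x) := by
  refine le_Phi ((nonempty_range_iff.2 ha.ne').image _) fun J hJ hJne W hW => ?_
  obtain ⟨I, hI, rfl⟩ := subset_image_iff.1 hJ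
  rw [← Nat.cast_sub hlk] at hp
  have hIa : #I ≤ a := by simpa using card_le_card (coe_subset.1 hI)
  refine rpow_half_le_pow_mul_pow hn hε hp (card_image_le.trans hIa) ?_
  calc (k - ℓ) * #(I.image (paxEdge k ℓ a x)) + ℓ ≤ (k - ℓ) * #I + ℓ := by
        gcongr
        exact card_image_le
    _ ≤ #(I.biUnion (paxEdge k ℓ a x)) :=
        mul_card_add_le_card_biUnion_paxEdge hlk (image_nonempty.1 hJne) (coe_subset.1 hI) x
    _ ≤ #W := card_le_card (biUnion_subset.2 (forall_mem_image.1 hW))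

end Path

theorem many_pax_copies_in_each_family_general (k ℓ a x m : ℕ) (hl1 : 1 ≤ ℓ) (hlk : ℓ < k)
    (ha : 1 ≤ a) (ε : ℝ) (hε : ε ≤ (ℓ : ℝ) / (2 * (a : ℝ))) (γ : ℝ) (hγ : 0 < γ) :
    ∃ n₀ : ℕ, ∀ n : ℕ, n₀ ≤ n → ∀ t : ℕ, t ≤ n ^ m →
      ∀ ℱ : Fin t → Finset (Fin (2 * x + ℓ + (k - ℓ) * a) → Fin n),
        (∀ i, (∀ w ∈ ℱ i, Function.Injective w) ∧
          γ * (n : ℝ) ^ (2 * x + ℓ + (k - ℓ) * a) ≤ #(ℱ i)) →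
        ∀ p : ℝ, p ≤ 1 → (n : ℝ) ^ (-((k : ℝ) - (ℓ : ℝ)) - ε) ≤ p →
          1 - Real.exp (-((n : ℝ) ^ ((1 : ℝ) / 3))) ≤
            gProb n k p (fun E => ∀ i,
              γ / 2 * p ^ a * (n : ℝ) ^ (2 * x + ℓ + (k - ℓ) * a) ≤
                #{w ∈ ℱ i | SpansPax k ℓ a x E w}) := by
  obtain ⟨n₀, hn₀⟩ := Filter.eventually_atTop.1 <| many_spansCopy_in_each_family
    (card_of_mem_paxEdges hlk.le : ∀ e ∈ paxEdges k ℓ a x, #e = k) m hγ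
  refine ⟨max n₀ 1, fun n hn t ht ℱ hℱ p hp₁ hp => ?_⟩
  have hn₁ : 1 ≤ n := (le_max_right _ _).trans hn
  have hn₁' : (1 : ℝ) ≤ n := by exact_mod_cast hn₁
  have hp₀ : 0 < p := lt_of_lt_of_le (by positivity) hp
  have hPhi : (n : ℝ) ^ (1 / 2 : ℝ) ≤ Phi n p (paxEdges k ℓ a x) :=
    (Real.rpow_le_rpow_of_exponent_le hn₁' (by gcongr; exact_mod_cast hl1)).trans
      (rpow_half_le_Phi_paxEdges hlk.le ha hn₁ hε hp x)
  have hspans (i : Fin t) (E : Finset (Finset (Fin n))) : {w ∈ ℱ i | SpansPax k ℓ a x E w} =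
      {w ∈ ℱ i | SpansCopy (paxEdges k ℓ a x) E w} :=
    filter_congr fun w hw => spansPax_iff.trans (and_iff_right ((hℱ i).1 w hw))
  simp only [hspans]
  simpa only [card_paxEdges hlk] using
    hn₀ n ((le_max_left _ _).trans hn) p hp₀ hp₁ hPhi t ht ℱ hℱ

/-- Lemma 2.3. Given at most `n^{2k}` families of `γ n^b` ordered
`b`-subsets each, with probability at least `1 - exp(-n^{1/3})`, in every family at least
`(γ/2) p^a n^b` members span labeled copies of `P_{a,x}`. -/
theorem many_pax_copies_in_each_family
    (k ℓ a x : ℕ) (hk : 3 ≤ k) (hl1 : 1 ≤ ℓ) (hlk : ℓ ≤ k - 1)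
    (ha : 1 ≤ a) (hx : x ≤ k)
    (ε : ℝ) (hε0 : 0 < ε) (hε : ε ≤ (ℓ : ℝ) / (2 * (a : ℝ)))
    (γ : ℝ) (hγ : 0 < γ) :
    ∃ n₀ : ℕ, ∀ n : ℕ, n₀ ≤ n →
      ∀ t : ℕ, t ≤ n ^ (2 * k) →
        ∀ ℱ : Fin t → Finset (Fin (2 * x + ℓ + (k - ℓ) * a) → Fin n),
          (∀ i, (∀ w ∈ ℱ i, Function.Injective w) ∧
            ((ℱ i).card : ℝ) = γ * (n : ℝ) ^ (2 * x + ℓ + (k - ℓ) * a)) →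
          ∀ p : ℝ, 0 ≤ p → p ≤ 1 → (n : ℝ) ^ (-((k : ℝ) - (ℓ : ℝ)) - ε) ≤ p →
            1 - Real.exp (-((n : ℝ) ^ ((1 : ℝ) / 3))) ≤
              gProb n k p (fun E => ∀ i,
                γ / 2 * p ^ a * (n : ℝ) ^ (2 * x + ℓ + (k - ℓ) * a) ≤
                  (((ℱ i).filter (fun w => SpansPax k ℓ a x E w)).card : ℝ)) := by
  obtain ⟨n₀, hn₀⟩ := many_pax_copies_in_each_family_general k ℓ a x (2 * k) hl1
    (by omega) ha ε hε γ hγ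
  exact ⟨n₀, fun n hn t ht ℱ hℱ p _ hp₁ hp =>
    hn₀ n hn t ht ℱ (fun i => ⟨(hℱ i).1, (hℱ i).2.ge⟩) p hp₁ hp⟩
end

section
/- Let k ≥ 3 and 1 ≤ ℓ ≤ k−1 be integers and let 0 < η ≤ α, 1/k. Let H be an n-vertex k-graph with δ₁(H) ≥ α·n^{k−1}. Then there exists a spanning subgraph H′ of H satisfying: (1) e(H′) ≥ α·n^k/(2k); (2) deg_{H′}(v) ≥ (2α/3)·n^{k−1} for all but at most 3kη²n/α vertices v of H; and (3) for every ℓ-set S of vertices, either deg_{H′}(S) = 0 or deg_{H′}(S) ≥ η²·n^{k−ℓ}. -/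
open Finset
open scoped Classical

/-!
As long as some `ℓ`-set has positive degree less than `t`, delete all edges containing it.
Every round costs fewer than `t` edges and destroys that `ℓ`-set for good, so in total at most
`t` times the size of the `ℓ`-shadow is lost. With `t = η² n ^ (k - ℓ)` and `ℓ ≥ 2`, the bound
`n.choose ℓ ≤ n ^ ℓ / 2` makes this at most `η² n ^ k / 2`; for `ℓ ≤ 1` the minimum degree
condition shows that nothing has to be deleted. Double counting incidences of vertices and edges
then bounds both the number of remaining edges and the number of vertices of low degree.
-/

lemma choose_le_pow_div_two {ℓ : ℕ} (n : ℕ) (hℓ : 2 ≤ ℓ) : (n.choose ℓ : ℝ) ≤ (n : ℝ) ^ ℓ / 2 := by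
  have hfactorial : (2 : ℝ) ≤ ℓ.factorial := by exact_mod_cast hℓ.trans ℓ.self_le_factorial
  exact (Nat.choose_le_pow_div ℓ n).trans (by gcongr)

section Shaving

variable {V : Type*} [DecidableEq V] {k ℓ : ℕ} {E G H : Finset (Finset V)} {S : Finset V}

/-- The degree of a vertex set `S` in the hypergraph with edge set `E`: the number of edges
containing `S`. It is `degOf` over an arbitrary vertex type. -/
def setDegree (E : Finset (Finset V)) (S : Finset V) : ℕ :=
  #{e ∈ E | S ⊆ e}

/-- The `ℓ`-shadow of a hypergraph: all `ℓ`-sets contained in some edge. It is `shadowL`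
over an arbitrary vertex type; for `k`-graphs with `ℓ ≤ k` it is the `(k - ℓ)`-fold iterate of
`Finset.shadow`. -/
def levelShadow (ℓ : ℕ) (E : Finset (Finset V)) : Finset (Finset V) :=
  E.biUnion (powersetCard ℓ)

/-- A hypergraph is `t`-shaved at level `ℓ` if no `ℓ`-set has positive degree less than `t`. -/
def IsShaved (ℓ : ℕ) (t : ℝ) (E : Finset (Finset V)) : Prop :=
  ∀ S : Finset V, #S = ℓ → setDegree E S = 0 ∨ t ≤ setDegree E S

lemma setDegree_mono (h : G ⊆ H) (S : Finset V) : setDegree G S ≤ setDegree H S :=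
  card_le_card (filter_subset_filter _ h)

@[simp]
lemma setDegree_empty (E : Finset (Finset V)) : setDegree E ∅ = #E := by
  simp [setDegree]

lemma setDegree_add_card_filter_not_subset (E : Finset (Finset V)) (S : Finset V) :
    setDegree E S + #{e ∈ E | ¬ S ⊆ e} = #E :=
  card_filter_add_card_filter_not _

lemma exists_mem_subset_of_setDegree_ne_zero (h : setDegree E S ≠ 0) : ∃ e ∈ E, S ⊆ e := by
  simpa [setDegree, filter_eq_empty_iff] using h

lemma mem_levelShadow : S ∈ levelShadow ℓ E ↔ ∃ e ∈ E, S ⊆ e ∧ #S = ℓ := by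
  simp [levelShadow]

lemma levelShadow_mono (ℓ : ℕ) (h : G ⊆ H) : levelShadow ℓ G ⊆ levelShadow ℓ H :=
  biUnion_subset_biUnion_of_subset_left _ h

lemma card_levelShadow_le [Fintype V] (ℓ : ℕ) (E : Finset (Finset V)) :
    #(levelShadow ℓ E) ≤ (Fintype.card V).choose ℓ := by
  rw [← card_univ, ← card_powersetCard]
  exact card_le_card (biUnion_subset.2 fun e _ ↦ powersetCard_mono (subset_univ e))

lemma levelShadow_filter_not_subset_ssubset (hS : #S = ℓ) (hdeg : setDegree E S ≠ 0) :
    levelShadow ℓ {e ∈ E | ¬ S ⊆ e} ⊂ levelShadow ℓ E := by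
  refine (ssubset_iff_of_subset (levelShadow_mono ℓ (filter_subset _ _))).2 ⟨S, ?_, ?_⟩
  · obtain ⟨e, he, hSe⟩ := exists_mem_subset_of_setDegree_ne_zero hdeg
    exact mem_levelShadow.2 ⟨e, he, hSe, hS⟩
  · rw [mem_levelShadow]
    rintro ⟨e, he, hSe, -⟩
    exact (mem_filter.1 he).2 hSe

theorem exists_isShaved_subset (ℓ : ℕ) {t : ℝ} (ht : 0 ≤ t) (E : Finset (Finset V)) :
    ∃ G ⊆ E, (#E : ℝ) ≤ #G + t * #(levelShadow ℓ E) ∧ IsShaved ℓ t G := by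
  induction E using Finset.strongInduction with
  | H E ih =>
    by_cases hE : IsShaved ℓ t E
    · exact ⟨E, Subset.rfl, le_add_of_nonneg_right (by positivity), hE⟩
    obtain ⟨S, hS, hpos, hlt⟩ : ∃ S, #S = ℓ ∧ setDegree E S ≠ 0 ∧ (setDegree E S : ℝ) < t := by
      simpa [IsShaved] using hE
    obtain ⟨e, he, hSe⟩ := exists_mem_subset_of_setDegree_ne_zero hpos
    obtain ⟨G, hG, hloss, hGshaved⟩ := ih {e ∈ E | ¬ S ⊆ e}
      (filter_ssubset.2 ⟨e, he, not_not.2 hSe⟩)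
    refine ⟨G, hG.trans (filter_subset _ _), ?_, hGshaved⟩
    have hsplit : (setDegree E S : ℝ) + #{e ∈ E | ¬ S ⊆ e} = #E := by
      exact_mod_cast setDegree_add_card_filter_not_subset E S
    have hshadow : (#(levelShadow ℓ {e ∈ E | ¬ S ⊆ e}) : ℝ) + 1 ≤ #(levelShadow ℓ E) := by
      exact_mod_cast card_lt_card (levelShadow_filter_not_subset_ssubset hS hpos)
    calc (#E : ℝ) ≤ #G + t * (#(levelShadow ℓ {e ∈ E | ¬ S ⊆ e}) + 1) := by linarith
      _ ≤ #G + t * #(levelShadow ℓ E) := by gcongr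

variable [Fintype V]

lemma exists_isShaved_subset_of_two_le (hℓ : 2 ≤ ℓ) (hℓk : ℓ ≤ k) {c : ℝ} (hc : 0 ≤ c)
    (H : Finset (Finset V)) :
    ∃ G ⊆ H, (#H : ℝ) - #G ≤ c * (Fintype.card V : ℝ) ^ k / 2 ∧
      IsShaved ℓ (c * (Fintype.card V : ℝ) ^ (k - ℓ)) G := by
  set n := Fintype.card V
  obtain ⟨G, hGH, hloss, hG⟩ :=
    exists_isShaved_subset ℓ (t := c * (n : ℝ) ^ (k - ℓ)) (by positivity) H
  refine ⟨G, hGH, ?_, hG⟩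
  have hshadow : (#(levelShadow ℓ H) : ℝ) ≤ (n : ℝ) ^ ℓ / 2 :=
    (Nat.cast_le.2 (card_levelShadow_le ℓ H)).trans (choose_le_pow_div_two n hℓ)
  calc (#H : ℝ) - #G ≤ c * (n : ℝ) ^ (k - ℓ) * #(levelShadow ℓ H) := by linarith
    _ ≤ c * (n : ℝ) ^ (k - ℓ) * ((n : ℝ) ^ ℓ / 2) := by gcongr
    _ = c * (n : ℝ) ^ k / 2 := by rw [← pow_sub_mul_pow (n : ℝ) hℓk]; ring

lemma sum_setDegree_singleton (E : Finset (Finset V)) :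
    ∑ v, setDegree E {v} = ∑ e ∈ E, #e := by
  simpa [setDegree, bipartiteAbove, bipartiteBelow] using
    sum_card_bipartiteAbove_eq_sum_card_bipartiteBelow (s := univ) (t := E) fun v e ↦ v ∈ e

lemma sum_setDegree_singleton_of_sized (hE : (E : Set (Finset V)).Sized k) :
    ∑ v, (setDegree E {v} : ℝ) = k * #E := by
  have hsum : ∑ v, setDegree E {v} = #E * k :=
    (sum_setDegree_singleton E).trans (sum_const_nat fun e he ↦ hE he)
  rw [mul_comm]
  exact_mod_cast hsum

lemma card_mul_le_mul_card_of_le_setDegree (hE : (E : Set (Finset V)).Sized k) {a : ℝ}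
    (ha : ∀ v, a ≤ setDegree E {v}) : Fintype.card V * a ≤ k * #E := by
  rw [← sum_setDegree_singleton_of_sized hE, ← card_univ, ← nsmul_eq_mul]
  exact card_nsmul_le_sum _ _ _ fun v _ ↦ ha v

lemma card_setDegree_lt_mul_sub_le (hH : (H : Set (Finset V)).Sized k) (hGH : G ⊆ H) {a b : ℝ}
    (ha : ∀ v, a ≤ setDegree H {v}) :
    #{v : V | (setDegree G {v} : ℝ) < b} * (a - b) ≤ k * (#H - #G : ℝ) := by
  have hG : (G : Set (Finset V)).Sized k := hH.mono (coe_subset.2 hGH)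
  have hmono (v : V) : (setDegree G {v} : ℝ) ≤ setDegree H {v} :=
    Nat.cast_le.2 (setDegree_mono hGH {v})
  calc #{v : V | (setDegree G {v} : ℝ) < b} * (a - b)
      ≤ ∑ v with (setDegree G {v} : ℝ) < b, ((setDegree H {v} : ℝ) - setDegree G {v}) := by
        rw [← nsmul_eq_mul]
        exact card_nsmul_le_sum _ _ _ fun v hv ↦ sub_le_sub (ha v) (mem_filter.1 hv).2.le
    _ ≤ ∑ v, ((setDegree H {v} : ℝ) - setDegree G {v}) :=
        sum_le_univ_sum_of_nonneg fun v ↦ sub_nonneg.2 (hmono v)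
    _ = k * (#H - #G : ℝ) := by
        rw [sum_sub_distrib, sum_setDegree_singleton_of_sized hH,
          sum_setDegree_singleton_of_sized hG, mul_sub]

lemma mul_card_pow_le_mul_card (hk : 0 < k) (hE : (E : Set (Finset V)).Sized k) {α : ℝ}
    (hdeg : ∀ v, α * (Fintype.card V : ℝ) ^ (k - 1) ≤ setDegree E {v}) :
    α * (Fintype.card V : ℝ) ^ k ≤ k * #E := by
  rw [← mul_pow_sub_one hk.ne' (Fintype.card V : ℝ), mul_left_comm]
  exact card_mul_le_mul_card_of_le_setDegree hE hdeg

lemma isShaved_of_le_one (hk : 0 < k) (hℓ : ℓ ≤ 1) (hE : (E : Set (Finset V)).Sized k)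
    {α c : ℝ} (hc : 0 ≤ c) (hcα : k * c ≤ α)
    (hdeg : ∀ v, α * (Fintype.card V : ℝ) ^ (k - 1) ≤ setDegree E {v}) :
    IsShaved ℓ (c * (Fintype.card V : ℝ) ^ (k - ℓ)) E := by
  intro S hS
  right
  obtain rfl | rfl := Nat.le_one_iff_eq_zero_or_eq_one.1 hℓ
  · obtain rfl := card_eq_zero.1 hS
    rw [setDegree_empty, Nat.sub_zero]
    refine le_of_mul_le_mul_left ?_ (Nat.cast_pos.2 hk : (0 : ℝ) < k)
    calc k * (c * (Fintype.card V : ℝ) ^ k) = k * c * (Fintype.card V : ℝ) ^ k := by ring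
      _ ≤ α * (Fintype.card V : ℝ) ^ k := by gcongr
      _ ≤ k * #E := mul_card_pow_le_mul_card hk hE hdeg
  · obtain ⟨v, rfl⟩ := card_eq_one.1 hS
    have hcα' : c ≤ α := (le_mul_of_one_le_left hc (by exact_mod_cast hk)).trans hcα
    calc c * (Fintype.card V : ℝ) ^ (k - 1) ≤ α * (Fintype.card V : ℝ) ^ (k - 1) := by gcongr
      _ ≤ setDegree E {v} := hdeg v

lemma exists_isShaved_subset_of_le_setDegree (hk : 0 < k) (hℓk : ℓ ≤ k)
    (hH : (H : Set (Finset V)).Sized k) {α c : ℝ} (hc : 0 ≤ c) (hcα : k * c ≤ α)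
    (hdeg : ∀ v, α * (Fintype.card V : ℝ) ^ (k - 1) ≤ setDegree H {v}) :
    ∃ G ⊆ H, (#H : ℝ) - #G ≤ c * (Fintype.card V : ℝ) ^ k / 2 ∧
      IsShaved ℓ (c * (Fintype.card V : ℝ) ^ (k - ℓ)) G := by
  obtain hℓ | hℓ := Nat.lt_or_ge ℓ 2
  · exact ⟨H, Subset.rfl, by rw [sub_self]; positivity,
      isShaved_of_le_one hk (Nat.le_of_lt_succ hℓ) hH hc hcα hdeg⟩
  · exact exists_isShaved_subset_of_two_le hℓ hℓk hc H

lemma card_lowDegree_le_of_card_sub_le (hk : 0 < k) (hH : (H : Set (Finset V)).Sized k)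
    (hGH : G ⊆ H) {α c : ℝ} (hα : 0 < α) (hc : 0 ≤ c)
    (hdeg : ∀ v, α * (Fintype.card V : ℝ) ^ (k - 1) ≤ setDegree H {v})
    (hloss : (#H : ℝ) - #G ≤ c * (Fintype.card V : ℝ) ^ k / 2) :
    (#{v : V | (setDegree G {v} : ℝ) < 2 * α / 3 * (Fintype.card V : ℝ) ^ (k - 1)} : ℝ)
      ≤ 3 * k * c * Fintype.card V / α := by
  obtain _ | _ := isEmpty_or_nonempty V
  · simp
  set n := Fintype.card V
  set B := #{v : V | (setDegree G {v} : ℝ) < 2 * α / 3 * (n : ℝ) ^ (k - 1)}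
  have hcount : B * (α / 3) * (n : ℝ) ^ (k - 1) ≤ k * c * n / 2 * (n : ℝ) ^ (k - 1) := by
    calc B * (α / 3) * (n : ℝ) ^ (k - 1)
        = B * (α * (n : ℝ) ^ (k - 1) - 2 * α / 3 * (n : ℝ) ^ (k - 1)) := by ring
      _ ≤ k * (#H - #G : ℝ) := card_setDegree_lt_mul_sub_le hH hGH hdeg
      _ ≤ k * (c * (n : ℝ) ^ k / 2) := by gcongr
      _ = k * c * n / 2 * (n : ℝ) ^ (k - 1) := by rw [← mul_pow_sub_one hk.ne' (n : ℝ)]; ring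
  have hB : B * (α / 3) ≤ k * c * n / 2 := le_of_mul_le_mul_right hcount
    (pow_pos (Nat.cast_pos.2 Fintype.card_pos) _)
  have hnonneg : 0 ≤ k * c * n := by positivity
  rw [le_div_iff₀ hα]
  linarith

theorem shaving_lemma_general (hk : 0 < k) (hℓk : ℓ ≤ k) {α c : ℝ} (hα : 0 < α) (hc : 0 ≤ c)
    (hcα : k * c ≤ α) (hH : (H : Set (Finset V)).Sized k)
    (hdeg : ∀ v, α * (Fintype.card V : ℝ) ^ (k - 1) ≤ setDegree H {v}) :
    ∃ H' ⊆ H, α * (Fintype.card V : ℝ) ^ k / (2 * k) ≤ #H' ∧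
      (#{v : V | (setDegree H' {v} : ℝ) < 2 * α / 3 * (Fintype.card V : ℝ) ^ (k - 1)} : ℝ)
        ≤ 3 * k * c * Fintype.card V / α ∧
      IsShaved ℓ (c * (Fintype.card V : ℝ) ^ (k - ℓ)) H' := by
  obtain ⟨G, hGH, hloss, hG⟩ := exists_isShaved_subset_of_le_setDegree hk hℓk hH hc hcα hdeg
  refine ⟨G, hGH, ?_, card_lowDegree_le_of_card_sub_le hk hH hGH hα hc hdeg hloss, hG⟩
  set n := Fintype.card V
  have hkG : α * (n : ℝ) ^ k / 2 ≤ k * #G := by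
    calc α * (n : ℝ) ^ k / 2 = α * (n : ℝ) ^ k - α * (n : ℝ) ^ k / 2 := by ring
      _ ≤ k * #H - k * c * (n : ℝ) ^ k / 2 :=
        sub_le_sub (mul_card_pow_le_mul_card hk hH hdeg) (by gcongr)
      _ = k * (#H - c * (n : ℝ) ^ k / 2) := by ring
      _ ≤ k * #G := by gcongr; linarith
  rw [div_le_iff₀ (by positivity)]
  linarith

end Shaving

/-- Lemma 3.1, the shaving lemma. Every `k`-graph `H` with
`δ₁(H) ≥ α n^{k-1}` has a spanning subgraph `H'` with `e(H') ≥ α n^k/(2k)`, in which all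
but at most `3kη²n/α` vertices keep degree at least `(2α/3) n^{k-1}`, and in which every
`ℓ`-set has degree `0` or at least `η² n^{k-ℓ}`. -/
theorem shaving_lemma
    (k ℓ n : ℕ) (hk : 3 ≤ k) (hl1 : 1 ≤ ℓ) (hlk : ℓ ≤ k - 1)
    (α η : ℝ) (hη0 : 0 < η) (hηα : η ≤ α) (hηk : η ≤ 1 / (k : ℝ))
    (H : Finset (Finset (Fin n))) (hH : H ⊆ kSets n k)
    (hdeg : ∀ v : Fin n, α * (n : ℝ) ^ (k - 1) ≤ (degOf H {v} : ℝ)) :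
    ∃ H' : Finset (Finset (Fin n)), H' ⊆ H ∧
      α * (n : ℝ) ^ k / (2 * (k : ℝ)) ≤ (H'.card : ℝ) ∧
      ((Finset.univ.filter (fun v : Fin n =>
          (degOf H' {v} : ℝ) < 2 * α / 3 * (n : ℝ) ^ (k - 1))).card : ℝ)
        ≤ 3 * (k : ℝ) * η ^ 2 * (n : ℝ) / α ∧
      ∀ S : Finset (Fin n), S.card = ℓ →
        degOf H' S = 0 ∨ η ^ 2 * (n : ℝ) ^ (k - ℓ) ≤ (degOf H' S : ℝ) := by
  have hkη : k * η ^ 2 ≤ α := by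
    calc k * η ^ 2 = η * k * η := by ring
      _ ≤ 1 * η := by gcongr; rwa [le_div_iff₀ (by positivity)] at hηk
      _ ≤ α := by rwa [one_mul]
  have hsized : (H : Set (Finset (Fin n))).Sized k := fun _ he ↦ (mem_powersetCard.1 (hH he)).2
  have hshaving := shaving_lemma_general (by omega) (by omega : ℓ ≤ k) (hη0.trans_le hηα)
    (sq_nonneg η) hkη hsized (by rw [Fintype.card_fin]; exact hdeg)
  rw [Fintype.card_fin] at hshaving
  exact hshaving
end
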